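/- arXiv:math/0308145 — 2 statements merged into one kernel-verified Lean document; each statement's English description precedes it below -/
import Mathlib

section
/- Let E_1, …, E_n, F be Banach spaces over K = ℝ or ℂ and 0 < p < ∞. A continuous n-linear map T : E_1 × ⋯ × E_n → F is p-semi-integral if and only if there exists a constant C ≥ 0 such that (∑_{j=1}^m ‖T(x_{1,j}, …, x_{n,j})‖^p)^{1/p} ≤ C ( sup { ∑_{j=1}^m |φ_1(x_{1,j}) ⋯ φ_n(x_{n,j})|^p : φ_l ∈ B_{E_l'}, l = 1, …, n } )^{1/p} for every m ∈ ℕ and all vectors x_{l,j} ∈ E_l (l = 1, …, n, j = 1, …, m). Moreover, the infimum of all such constants C equals ‖T‖_{si,p}. -/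
open MeasureTheory

/-- Weak `ℓ_q` norm of a finite family in a normed space. -/
noncomputable def weakLpNorm (𝕜 : Type*) [RCLike 𝕜] {E : Type*} [NormedAddCommGroup E]
    [NormedSpace 𝕜 E] (q : ℝ) {m : ℕ} (x : Fin m → E) : ℝ :=
  ⨆ φ : {φ : E →L[𝕜] 𝕜 // ‖φ‖ ≤ 1}, (∑ j, ‖φ.1 (x j)‖ ^ q) ^ (1 / q)

/-- `T` satisfies the `p`-semi-integral inequality with constant `C`, witnessed by a regular
Borel probability measure on the product of the closed dual unit balls with their
weak-star topologies. -/
def SemiIntegralWith (𝕜 : Type*) [RCLike 𝕜] {ι : Type*} [Fintype ι] {E : ι → Type*}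
    [∀ i, NormedAddCommGroup (E i)] [∀ i, NormedSpace 𝕜 (E i)]
    {F : Type*} [NormedAddCommGroup F]
    (p C : ℝ) (T : (∀ i, E i) → F) : Prop :=
  letI : MeasurableSpace (∀ i, {φ : WeakDual 𝕜 (E i) // ∀ z, ‖φ z‖ ≤ ‖z‖}) := borel _
  ∃ μ : Measure (∀ i, {φ : WeakDual 𝕜 (E i) // ∀ z, ‖φ z‖ ≤ ‖z‖}),
    IsProbabilityMeasure μ ∧ μ.Regular ∧
      ∀ x : ∀ i, E i,
        ‖T x‖ ≤ C * (∫ φ, ∏ i, ‖(φ i).1 (x i)‖ ^ p ∂μ) ^ (1 / p)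

/-- The `si,p` norm: infimum of admissible constants. -/
noncomputable def siNorm (𝕜 : Type*) [RCLike 𝕜] {ι : Type*} [Fintype ι] {E : ι → Type*}
    [∀ i, NormedAddCommGroup (E i)] [∀ i, NormedSpace 𝕜 (E i)]
    {F : Type*} [NormedAddCommGroup F]
    (p : ℝ) (T : (∀ i, E i) → F) : ℝ :=
  sInf {C : ℝ | 0 ≤ C ∧ SemiIntegralWith 𝕜 p C T}

/-- `T` is absolutely `(p; q₁,…,qₙ)`-summing with constant `C`. -/
def AbsSummingWith (𝕜 : Type*) [RCLike 𝕜] {ι : Type*} [Fintype ι] {E : ι → Type*}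
    [∀ i, NormedAddCommGroup (E i)] [∀ i, NormedSpace 𝕜 (E i)]
    {F : Type*} [NormedAddCommGroup F]
    (p : ℝ) (q : ι → ℝ) (C : ℝ) (T : (∀ i, E i) → F) : Prop :=
  ∀ (m : ℕ) (x : ∀ i, Fin m → E i),
    (∑ j, ‖T (fun i => x i j)‖ ^ p) ^ (1 / p) ≤ C * ∏ i, weakLpNorm 𝕜 (q i) (x i)

/-- `T` is `p`-dominated with constant `C`, witnessed by regular Borel probability measures
on the closed dual unit balls with their weak-star topologies. -/
def DominatedWith (𝕜 : Type*) [RCLike 𝕜] {ι : Type*} [Fintype ι] {E : ι → Type*}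
    [∀ i, NormedAddCommGroup (E i)] [∀ i, NormedSpace 𝕜 (E i)]
    {F : Type*} [NormedAddCommGroup F]
    (p C : ℝ) (T : (∀ i, E i) → F) : Prop :=
  letI : ∀ i, MeasurableSpace {φ : WeakDual 𝕜 (E i) // ∀ z, ‖φ z‖ ≤ ‖z‖} := fun i => borel _
  ∃ μ : ∀ i, Measure {φ : WeakDual 𝕜 (E i) // ∀ z, ‖φ z‖ ≤ ‖z‖},
    (∀ i, IsProbabilityMeasure (μ i)) ∧ (∀ i, (μ i).Regular) ∧
      ∀ x : ∀ i, E i,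
        ‖T x‖ ≤ C * ∏ i, (∫ φ, ‖φ.1 (x i)‖ ^ p ∂(μ i)) ^ (1 / p)

/-- `E` is an `𝓛_∞`-space. -/
def IsLinftySpace (𝕜 : Type*) [RCLike 𝕜] (E : Type*) [NormedAddCommGroup E]
    [NormedSpace 𝕜 E] : Prop :=
  ∃ lam : ℝ, 1 ≤ lam ∧ ∀ M : Submodule 𝕜 E, FiniteDimensional 𝕜 M →
    ∃ N : Submodule 𝕜 E, M ≤ N ∧ FiniteDimensional 𝕜 N ∧
      ∃ v : N ≃L[𝕜] (Fin (Module.finrank 𝕜 N) → 𝕜),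
        ‖(v : N →L[𝕜] (Fin (Module.finrank 𝕜 N) → 𝕜))‖ *
          ‖(v.symm : (Fin (Module.finrank 𝕜 N) → 𝕜) →L[𝕜] N)‖ ≤ lam

/-- `F` has cotype `q`. -/
def HasCotype (q : ℝ) (F : Type*) [NormedAddCommGroup F] : Prop :=
  ∃ C : ℝ, 0 ≤ C ∧ ∀ (m : ℕ) (x : Fin m → F),
    (∑ j, ‖x j‖ ^ q) ^ (1 / q) ≤
      C * ((∑ ε : Fin m → Bool, ‖∑ j, (if ε j then x j else -x j)‖ ^ (2 : ℝ)) / 2 ^ m)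
        ^ ((1 : ℝ) / 2)

/-- The finite-family sup-form inequality characterizing `p`-semi-integral maps. -/
def SemiIntegralSupIneq (𝕜 : Type*) [RCLike 𝕜] {ι : Type*} [Fintype ι] {E : ι → Type*}
    [∀ i, NormedAddCommGroup (E i)] [∀ i, NormedSpace 𝕜 (E i)]
    {F : Type*} [NormedAddCommGroup F]
    (p C : ℝ) (T : (∀ i, E i) → F) : Prop :=
  ∀ (m : ℕ) (x : ∀ i, Fin m → E i),
    (∑ j, ‖T (fun i => x i j)‖ ^ p) ^ (1 / p) ≤
      C * (⨆ φ : ∀ i, {ψ : WeakDual 𝕜 (E i) // ∀ z, ‖ψ z‖ ≤ ‖z‖},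
            ∑ j, ∏ i, ‖(φ i).1 (x i j)‖ ^ p) ^ (1 / p)

/-!
After raising to the power `p`, both properties concern the continuous functions
`R x φ = C ^ p * ∏ i, ‖φ i (x i)‖ ^ p` on the compact product of dual balls. A measure with
`‖T x‖ ^ p ≤ ∫ R x` for every `x` yields the inequality for families by summation. Conversely,
since a family may repeat its entries, the inequality for families says that no finite sum of
defects `R x - ‖T x‖ ^ p` with natural multiplicities is negative everywhere; by approximation
the same holds for the closed convex cone spanned by the defects and the nonnegative functions.
A functional separating `-1` from this cone is positive, and the Riesz–Markov–Kakutani theorem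
turns its normalization into the required measure.
-/

section Cone

open Filter Topology

theorem exists_eq_sum_fin_of_mem_closure_range {X A : Type*} [AddCommMonoid A] {f : X → A} {a : A}
    (ha : a ∈ AddSubmonoid.closure (Set.range f)) :
    ∃ (m : ℕ) (x : Fin m → X), a = ∑ j, f (x j) := by
  obtain ⟨l, hl, rfl⟩ := AddSubmonoid.exists_list_of_mem_closure ha
  obtain ⟨l, rfl⟩ : l ∈ Set.range (List.map f) := by rwa [Set.range_list_map]
  exact ⟨l.length, l.get, by simp⟩

theorem disjoint_closure_hull_of_disjoint {V : Type*} [AddCommGroup V] [Module ℝ V]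
    [TopologicalSpace V] [ContinuousAdd V] [ContinuousSMul ℝ V] {M : AddSubmonoid V} {U : Set V}
    (hU : IsOpen U) (hsmul : ∀ c : ℝ, 0 < c → ∀ v ∈ U, c • v ∈ U) (hMU : Disjoint (M : Set V) U) :
    Disjoint (closure (PointedCone.hull ℝ (M : Set V) : Set V)) U := by
  refine Disjoint.closure_left (Set.disjoint_left.2 fun v hv hvU => ?_) hU
  obtain ⟨k, c, g, rfl⟩ := Submodule.mem_span_set'.1 hv
  -- Integer multiples stay in `M`, so `c i` is approximated by `⌊c i * N⌋₊ / N`.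
  have htends : Tendsto (fun N : ℝ => ∑ i, ((⌊(c i : ℝ) * N⌋₊ : ℝ) / N) • (g i : V)) atTop
      (𝓝 (∑ i, (c i : ℝ) • (g i : V))) :=
    tendsto_finsetSum _ fun i _ =>
      (tendsto_nat_floor_mul_div_atTop (c i).2).smul_const (g i : V)
  obtain ⟨N, hNU, hN⟩ :=
    ((htends.eventually_mem (hU.mem_nhds hvU)).and (eventually_gt_atTop 0)).exists
  have hmul : N • ∑ i, ((⌊(c i : ℝ) * N⌋₊ : ℝ) / N) • (g i : V) =
      ∑ i, ⌊(c i : ℝ) * N⌋₊ • (g i : V) := by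
    simp only [Finset.smul_sum, smul_smul, mul_div_cancel₀ _ hN.ne', Nat.cast_smul_eq_nsmul]
  exact Set.disjoint_left.1 hMU (sum_mem fun i _ => nsmul_mem (g i).2 _)
    (hmul ▸ hsmul N hN _ hNU)

end Cone

theorem integral_le_ciSup {Ω : Type*} [MeasurableSpace Ω] {μ : Measure Ω} [IsProbabilityMeasure μ]
    {f : Ω → ℝ} (hf : Integrable f μ) (hbdd : BddAbove (Set.range f)) :
    ∫ ω, f ω ∂μ ≤ ⨆ ω, f ω := by
  simpa using integral_mono hf (integrable_const (⨆ ω, f ω)) (le_ciSup hbdd)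

section Compact

open scoped CompactlySupported

variable {K : Type*} [TopologicalSpace K] [CompactSpace K]

theorem exists_strongDual_nonneg_of_addSubmonoid {M : AddSubmonoid C(K, ℝ)}
    (hM : ∀ g ∈ M, ∃ k, 0 ≤ g k) :
    ∃ L : StrongDual ℝ C(K, ℝ), (∀ f, 0 ≤ f → 0 ≤ L f) ∧ (∀ g ∈ M, 0 ≤ L g) ∧ 0 < L 1 := by
  let U : Set C(K, ℝ) := {f | Set.MapsTo f Set.univ (Set.Iio 0)}
  have hU : IsOpen U := ContinuousMap.isOpen_setOfPred_mapsTo isCompact_univ isOpen_Iio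
  -- Adjoining the nonnegative functions makes the separating functional positive.
  let M' := M ⊔ AddSubmonoid.nonneg C(K, ℝ)
  have hM'U : Disjoint (M' : Set C(K, ℝ)) U := by
    refine Set.disjoint_left.2 fun f hf hfU => ?_
    obtain ⟨g, hg, f', hf', rfl⟩ := AddSubmonoid.mem_sup.1 hf
    obtain ⟨k, hk⟩ := hM g hg
    exact (add_nonneg hk (hf' k)).not_gt (hfU (Set.mem_univ k))
  have hsmul : ∀ c : ℝ, 0 < c → ∀ f ∈ U, c • f ∈ U := fun c hc f hf k hk =>
    mul_neg_of_pos_of_neg hc (hf hk)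
  have hneg : (-1 : C(K, ℝ)) ∈ U := fun _ _ => neg_one_lt_zero (R := ℝ)
  let cone : ProperCone ℝ C(K, ℝ) :=
    Submodule.closure (PointedCone.hull ℝ (M' : Set C(K, ℝ)))
  have hcone : ∀ f ∈ M', f ∈ cone := fun f hf => subset_closure (PointedCone.subset_hull hf)
  obtain ⟨L, hL, hL1⟩ := cone.hyperplane_separation_point (x₀ := -1)
    fun h => Set.disjoint_left.1 (disjoint_closure_hull_of_disjoint hU hsmul hM'U) h hneg
  refine ⟨L, fun f hf => hL f (hcone _ ?_), fun g hg => hL g (hcone _ ?_), by simpa using hL1⟩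
  · exact AddSubmonoid.mem_sup_right hf
  · exact AddSubmonoid.mem_sup_left hg

theorem integrable_of_continuous [MeasurableSpace K] [OpensMeasurableSpace K] {A : Type*}
    [NormedAddCommGroup A] {f : K → A} (hf : Continuous f) (μ : Measure K)
    [IsFiniteMeasureOnCompacts μ] : Integrable f μ :=
  hf.integrable_of_hasCompactSupport (.of_compactSpace f)

variable [MeasurableSpace K] [BorelSpace K] [T2Space K]

theorem exists_regular_measure_integral_eq (Λ : C(K, ℝ) →ₚ[ℝ] ℝ) :
    ∃ μ : Measure K, μ.Regular ∧ ∀ f : C(K, ℝ), ∫ k, f k ∂μ = Λ f := by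
  let Λc : C_c(K, ℝ) →ₚ[ℝ] ℝ := .mk₀
    { toFun f := Λ f.toContinuousMap
      map_add' f g := map_add Λ f.toContinuousMap g.toContinuousMap
      map_smul' c f := map_smul Λ c f.toContinuousMap }
    fun f hf => map_nonneg Λ (show 0 ≤ f.toContinuousMap from hf)
  exact ⟨RealRMK.rieszMeasure Λc, inferInstance, fun f =>
    RealRMK.integral_rieszMeasure Λc (CompactlySupportedContinuousMap.continuousMapEquiv f)⟩

theorem exists_isProbabilityMeasure_integral_nonneg {M : AddSubmonoid C(K, ℝ)}
    (hM : ∀ g ∈ M, ∃ k, 0 ≤ g k) :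
    ∃ μ : Measure K, IsProbabilityMeasure μ ∧ μ.Regular ∧ ∀ g ∈ M, 0 ≤ ∫ k, g k ∂μ := by
  obtain ⟨L, hLpos, hLM, hL1⟩ := exists_strongDual_nonneg_of_addSubmonoid hM
  have hinv : 0 ≤ (L 1)⁻¹ := inv_nonneg.2 hL1.le
  obtain ⟨μ, hreg, hμ⟩ := exists_regular_measure_integral_eq (K := K) <|
    .mk₀ ((L 1)⁻¹ • L : StrongDual ℝ C(K, ℝ)).toLinearMap fun f hf => mul_nonneg hinv (hLpos f hf)
  replace hμ : ∀ f : C(K, ℝ), ∫ k, f k ∂μ = (L 1)⁻¹ * L f := hμ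
  refine ⟨μ, ⟨?_⟩, hreg, fun g hg => hμ g ▸ mul_nonneg hinv (hLM g hg)⟩
  have hmass : μ.real Set.univ = 1 := by simpa [hL1.ne'] using hμ 1
  rwa [← ENNReal.toReal_eq_one_iff]

theorem exists_isProbabilityMeasure_forall_le_integral_iff [Nonempty K] {X : Type*}
    {R : X → K → ℝ} (hR : ∀ x, Continuous (R x)) (S : X → ℝ) :
    (∃ μ : Measure K, IsProbabilityMeasure μ ∧ μ.Regular ∧ ∀ x, S x ≤ ∫ k, R x k ∂μ) ↔
      ∀ (m : ℕ) (x : Fin m → X), ∑ j, S (x j) ≤ ⨆ k, ∑ j, R (x j) k := by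
  have hsum {m : ℕ} (x : Fin m → X) : Continuous fun k => ∑ j, R (x j) k :=
    continuous_finsetSum _ fun j _ => hR (x j)
  constructor
  · rintro ⟨μ, _, -, hμ⟩ m x
    calc ∑ j, S (x j) ≤ ∑ j, ∫ k, R (x j) k ∂μ := Finset.sum_le_sum fun j _ => hμ (x j)
      _ = ∫ k, ∑ j, R (x j) k ∂μ :=
        (integral_finsetSum _ fun j _ => integrable_of_continuous (hR (x j)) μ).symm
      _ ≤ ⨆ k, ∑ j, R (x j) k :=
        integral_le_ciSup (integrable_of_continuous (hsum x) μ) (isCompact_range (hsum x)).bddAbove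
  · intro h
    let defect (x : X) : C(K, ℝ) := ⟨fun k => R x k - S x, (hR x).sub continuous_const⟩
    have hdefect : ∀ g ∈ AddSubmonoid.closure (Set.range defect), ∃ k, 0 ≤ g k := by
      intro g hg
      obtain ⟨m, x, rfl⟩ := exists_eq_sum_fin_of_mem_closure_range hg
      obtain ⟨k, hk : ∑ j, R (x j) k = ⨆ k, ∑ j, R (x j) k⟩ :=
        (isCompact_range (hsum x)).sSup_mem (Set.range_nonempty _)
      refine ⟨k, ?_⟩
      simpa [defect, hk] using h m x
    obtain ⟨μ, hprob, hreg, hμ⟩ := exists_isProbabilityMeasure_integral_nonneg hdefect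
    refine ⟨μ, hprob, hreg, fun x => ?_⟩
    have hx : 0 ≤ ∫ k, (R x k - S x) ∂μ := hμ _ (AddSubmonoid.subset_closure ⟨x, rfl⟩)
    rw [integral_sub (integrable_of_continuous (hR x) μ) (integrable_const _)] at hx
    simpa using hx

end Compact

section Rpow

variable {a b C p : ℝ}

theorem le_mul_rpow_one_div_iff (ha : 0 ≤ a) (hb : 0 ≤ b) (hC : 0 ≤ C) (hp : 0 < p) :
    a ≤ C * b ^ (1 / p) ↔ a ^ p ≤ C ^ p * b := by
  rw [← Real.rpow_le_rpow_iff ha (by positivity) hp, Real.mul_rpow hC (by positivity), one_div,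
    Real.rpow_inv_rpow hb hp.ne']

theorem rpow_one_div_le_mul_rpow_one_div_iff (ha : 0 ≤ a) (hb : 0 ≤ b) (hC : 0 ≤ C) (hp : 0 < p) :
    a ^ (1 / p) ≤ C * b ^ (1 / p) ↔ a ≤ C ^ p * b := by
  rw [le_mul_rpow_one_div_iff (by positivity) hb hC hp, one_div, Real.rpow_inv_rpow ha hp.ne']

end Rpow

section SemiIntegral

/-- The closed unit ball of the dual of `E` with the weak-star topology, written as the subtype
over which the measures in `SemiIntegralWith` live. -/
abbrev WeakDualBall (𝕜 E : Type*) [RCLike 𝕜] [NormedAddCommGroup E] [NormedSpace 𝕜 E] : Type _ :=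
  {φ : WeakDual 𝕜 E // ∀ z, ‖φ z‖ ≤ ‖z‖}

instance WeakDualBall.compactSpace (𝕜 E : Type*) [RCLike 𝕜] [NormedAddCommGroup E]
    [NormedSpace 𝕜 E] : CompactSpace (WeakDualBall 𝕜 E) := by
  have hball : {φ : WeakDual 𝕜 E | ∀ z, ‖φ z‖ ≤ ‖z‖} =
      WeakDual.toStrongDual ⁻¹' Metric.closedBall 0 1 := by
    ext φ
    simp [ContinuousLinearMap.opNorm_le_iff zero_le_one]
  have hcompact : IsCompact {φ : WeakDual 𝕜 E | ∀ z, ‖φ z‖ ≤ ‖z‖} :=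
    hball ▸ WeakDual.isCompact_closedBall 0 1
  exact isCompact_iff_compactSpace.1 hcompact

instance WeakDualBall.nonempty (𝕜 E : Type*) [RCLike 𝕜] [NormedAddCommGroup E]
    [NormedSpace 𝕜 E] : Nonempty (WeakDualBall 𝕜 E) :=
  ⟨0, fun z => norm_zero.trans_le (norm_nonneg z)⟩

variable {𝕜 : Type*} [RCLike 𝕜] {ι : Type*} [Fintype ι] {E : ι → Type*}
  [∀ i, NormedAddCommGroup (E i)] [∀ i, NormedSpace 𝕜 (E i)] {F : Type*} [NormedAddCommGroup F]
  {p C : ℝ}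

theorem continuous_prod_norm_eval_rpow (hp : 0 ≤ p) (x : ∀ i, E i) :
    Continuous fun φ : ∀ i, WeakDualBall 𝕜 (E i) => ∏ i, ‖(φ i).1 (x i)‖ ^ p :=
  continuous_finsetProd _ fun i _ =>
    ((WeakDual.eval_continuous (x i)).comp
      (continuous_subtype_val.comp (continuous_apply i))).norm.rpow_const fun _ => .inr hp

theorem prod_norm_eval_rpow_nonneg (φ : ∀ i, WeakDualBall 𝕜 (E i)) (x : ∀ i, E i) :
    0 ≤ ∏ i, ‖(φ i).1 (x i)‖ ^ p :=
  Finset.prod_nonneg fun _ _ => by positivity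

theorem semiIntegralWith_iff_supIneq (hp : 0 < p) (hC : 0 ≤ C) (T : (∀ i, E i) → F) :
    SemiIntegralWith 𝕜 p C T ↔ SemiIntegralSupIneq 𝕜 p C T := by
  let _ : MeasurableSpace (∀ i, WeakDualBall 𝕜 (E i)) := borel _
  have _ : BorelSpace (∀ i, WeakDualBall 𝕜 (E i)) := ⟨rfl⟩
  let R (x : ∀ i, E i) (φ : ∀ i, WeakDualBall 𝕜 (E i)) : ℝ := C ^ p * ∏ i, ‖(φ i).1 (x i)‖ ^ p
  have hR (x : ∀ i, E i) : Continuous (R x) :=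
    (continuous_prod_norm_eval_rpow hp.le x).const_mul _
  have hpoint (μ : Measure (∀ i, WeakDualBall 𝕜 (E i))) (x : ∀ i, E i) :
      ‖T x‖ ≤ C * (∫ φ, ∏ i, ‖(φ i).1 (x i)‖ ^ p ∂μ) ^ (1 / p) ↔
        ‖T x‖ ^ p ≤ ∫ φ, R x φ ∂μ := by
    rw [le_mul_rpow_one_div_iff (norm_nonneg _)
      (integral_nonneg fun φ => prod_norm_eval_rpow_nonneg φ x) hC hp, integral_const_mul]
  have hfamily {m : ℕ} (x : Fin m → ∀ i, E i) :
      (∑ j, ‖T (x j)‖ ^ p) ^ (1 / p) ≤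
          C * (⨆ φ : ∀ i, WeakDualBall 𝕜 (E i), ∑ j, ∏ i, ‖(φ i).1 (x j i)‖ ^ p) ^ (1 / p) ↔
        ∑ j, ‖T (x j)‖ ^ p ≤ ⨆ φ, ∑ j, R (x j) φ := by
    have hsup : 0 ≤ ⨆ φ : ∀ i, WeakDualBall 𝕜 (E i), ∑ j, ∏ i, ‖(φ i).1 (x j i)‖ ^ p :=
      Real.iSup_nonneg fun φ => Finset.sum_nonneg fun j _ => prod_norm_eval_rpow_nonneg φ (x j)
    rw [rpow_one_div_le_mul_rpow_one_div_iff (by positivity) hsup hC hp,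
      Real.mul_iSup_of_nonneg (by positivity)]
    simp only [R, Finset.mul_sum]
  calc SemiIntegralWith 𝕜 p C T
      ↔ ∃ μ : Measure (∀ i, WeakDualBall 𝕜 (E i)), IsProbabilityMeasure μ ∧ μ.Regular ∧
          ∀ x, ‖T x‖ ^ p ≤ ∫ φ, R x φ ∂μ := by simp only [SemiIntegralWith, hpoint]
    _ ↔ ∀ (m : ℕ) (x : Fin m → ∀ i, E i), ∑ j, ‖T (x j)‖ ^ p ≤ ⨆ φ, ∑ j, R (x j) φ :=
        exists_isProbabilityMeasure_forall_le_integral_iff hR _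
    _ ↔ ∀ (m : ℕ) (x : ∀ i, Fin m → E i),
          ∑ j, ‖T (fun i => x i j)‖ ^ p ≤ ⨆ φ, ∑ j, R (fun i => x i j) φ :=
        forall_congr' fun m => (Equiv.piComm _).forall_congr_left
    _ ↔ SemiIntegralSupIneq 𝕜 p C T := by simp only [SemiIntegralSupIneq, hfamily]

theorem semiIntegral_iff_supIneq_general (hp : 0 < p) (T : (∀ i, E i) → F) :
    ((∃ C, 0 ≤ C ∧ SemiIntegralWith 𝕜 p C T) ↔ ∃ C, 0 ≤ C ∧ SemiIntegralSupIneq 𝕜 p C T) ∧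
    sInf {C : ℝ | 0 ≤ C ∧ SemiIntegralSupIneq 𝕜 p C T} = siNorm 𝕜 p T := by
  have hiff (C : ℝ) : 0 ≤ C ∧ SemiIntegralWith 𝕜 p C T ↔ 0 ≤ C ∧ SemiIntegralSupIneq 𝕜 p C T :=
    and_congr_right fun hC => semiIntegralWith_iff_supIneq hp hC T
  exact ⟨exists_congr hiff, by simp only [siNorm, hiff]⟩

end SemiIntegral

/-- A continuous `n`-linear map between Banach spaces is `p`-semi-integral
if and only if it satisfies the finite-family sup-form inequality for some constant `C ≥ 0`;
moreover the infimum of such constants equals the semi-integral norm `‖T‖_{si,p}`. -/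
theorem semiIntegral_iff_supIneq {𝕜 : Type*} [RCLike 𝕜] {n : ℕ} (hn : 1 ≤ n)
    {E : Fin n → Type*} [∀ i, NormedAddCommGroup (E i)] [∀ i, NormedSpace 𝕜 (E i)]
    [∀ i, CompleteSpace (E i)]
    {F : Type*} [NormedAddCommGroup F] [NormedSpace 𝕜 F] [CompleteSpace F]
    {p : ℝ} (hp : 0 < p) (T : ContinuousMultilinearMap 𝕜 E F) :
    ((∃ C, 0 ≤ C ∧ SemiIntegralWith 𝕜 p C ⇑T) ↔
      ∃ C, 0 ≤ C ∧ SemiIntegralSupIneq 𝕜 p C ⇑T) ∧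
    sInf {C : ℝ | 0 ≤ C ∧ SemiIntegralSupIneq 𝕜 p C ⇑T} = siNorm 𝕜 p ⇑T := by
  exact semiIntegral_iff_supIneq_general hp T
end

section
/- Let E_1, …, E_n, F be Banach spaces, n = r + s with r, s ≥ 1, and q_1, …, q_s ∈ [1, ∞). Let A : E_1 × ⋯ × E_n → F be a continuous n-linear map and suppose there exists K > 0 such that for all x_1 ∈ E_1, …, x_r ∈ E_r, the continuous s-linear map A_{x_1⋯x_r}(x_{r+1}, …, x_n) := A(x_1, …, x_n) is absolutely (1; q_1, …, q_s)-summing with ‖A_{x_1⋯x_r}‖_{as(1;q_1,…,q_s)} ≤ K ‖A‖ ‖x_1‖ ⋯ ‖x_r‖. Then A is absolutely (1; 1, …, 1, q_1, …, q_s)-summing (with r entries equal to 1), and ‖A‖_{as(1;1,…,1,q_1,…,q_s)} ≤ K ‖A‖. -/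
open MeasureTheory

/-!
Write each of the first `r` entries of `x_j` as the average, over all sign vectors `ε`, of `ε_j`
times the Rademacher sum `∑ k, ε_k x_k`. By multilinearity and Minkowski's inequality, some choice
of signs lets one replace, for all `j` simultaneously, the `j`-dependent entries by the fixed
Rademacher sums without decreasing the `ℓ_p` norm of the values of `A`. The hypothesis then applies,
and Rademacher sums are bounded in norm by the weak `ℓ₁` norm.
-/

section SignAveraging

variable {ι κ : Type*} [Fintype κ]

/-- The Rademacher sum `∑ k, ε_k x_k` of a finite family `x` for the choice of signs `ε`, with signs
encoded as units of `ℤ` so that it makes sense in any abelian group. -/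
def rademacherSum {E : Type*} [AddCommGroup E] (ε : κ → ℤˣ) (x : κ → E) : E :=
  ∑ k, ε k • x k

lemma sum_sign_mul_sign [DecidableEq κ] (j k : κ) :
    ∑ ε : κ → ℤˣ, ((ε j * ε k : ℤˣ) : ℤ) = if k = j then 2 ^ Fintype.card κ else 0 := by
  split_ifs with hkj
  · simp [hkj, ← sq]
  · let χ : (κ → ℤˣ) →* ℤ :=
      (Units.coeHom ℤ).comp (Pi.evalMonoidHom (fun _ => ℤˣ) j * Pi.evalMonoidHom (fun _ => ℤˣ) k)
    have hχ : χ ≠ 1 := fun h => by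
      simpa [χ, Pi.mulSingle_eq_of_ne hkj] using DFunLike.congr_fun h (Pi.mulSingle j (-1))
    exact sum_hom_units_eq_zero χ hχ

lemma sum_sign_smul_rademacherSum [DecidableEq κ] {E : Type*} [AddCommGroup E] (x : κ → E) (j : κ) :
    ∑ ε : κ → ℤˣ, ε j • rademacherSum ε x = (2 ^ Fintype.card κ : ℤ) • x j :=
  calc ∑ ε : κ → ℤˣ, ε j • rademacherSum ε x
      = ∑ k, (∑ ε : κ → ℤˣ, ((ε j * ε k : ℤˣ) : ℤ)) • x k := by
        simp_rw [rademacherSum, Finset.smul_sum, smul_smul, Finset.sum_smul, ← Units.smul_def]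
        exact Finset.sum_comm
    _ = (2 ^ Fintype.card κ : ℤ) • x j := by
        simp only [sum_sign_mul_sign, ite_smul, zero_smul, Finset.sum_ite_eq', Finset.mem_univ,
          if_true]

variable [Fintype ι] {R : Type*} [CommRing R] {E : ι → Type*} [∀ i, AddCommGroup (E i)]
  [∀ i, Module R (E i)] {F : Type*} [AddCommGroup F] [Module R F]

lemma multilinearMap_map_units_smul_univ (f : MultilinearMap R E F) (u : ι → ℤˣ) (x : ∀ i, E i) :
    f (fun i => u i • x i) = (∏ i, u i) • f x := by
  simpa [Units.smul_def, Units.coe_prod] using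
    (f.restrictScalars ℤ).map_smul_univ (fun i => (u i : ℤ)) x

lemma sum_sign_smul_multilinearMap_rademacherSum [DecidableEq ι] [DecidableEq κ]
    (f : MultilinearMap R E F) (x : ∀ i, κ → E i) (j : κ) :
    ∑ ε : ι → κ → ℤˣ, (∏ i, ε i j) • f (fun i => rademacherSum (ε i) (x i)) =
      (Fintype.card (ι → κ → ℤˣ) : ℤ) • f (fun i => x i j) :=
  calc ∑ ε : ι → κ → ℤˣ, (∏ i, ε i j) • f (fun i => rademacherSum (ε i) (x i))
      = ∑ ε : ι → κ → ℤˣ, f (fun i => ε i j • rademacherSum (ε i) (x i)) := by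
        simp_rw [multilinearMap_map_units_smul_univ]
    _ = f (fun i => ∑ ε : κ → ℤˣ, ε j • rademacherSum ε (x i)) :=
        (f.map_sum fun i (ε : κ → ℤˣ) => ε j • rademacherSum ε (x i)).symm
    _ = f (fun i => (2 ^ Fintype.card κ : ℤ) • x i j) := by
        simp_rw [sum_sign_smul_rademacherSum]
    _ = (Fintype.card (ι → κ → ℤˣ) : ℤ) • f (fun i => x i j) := by
        simpa using (f.restrictScalars ℤ).map_smul_univ
          (fun _ => (2 ^ Fintype.card κ : ℤ)) (fun i => x i j)

end SignAveraging

lemma rpow_sum_norm_sum_le {α κ F : Type*} [Fintype κ] [SeminormedAddCommGroup F] {p : ℝ}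
    (hp : 1 ≤ p) (s : Finset α) (g : α → κ → F) :
    (∑ j, ‖∑ i ∈ s, g i j‖ ^ p) ^ (1 / p) ≤ ∑ i ∈ s, (∑ j, ‖g i j‖ ^ p) ^ (1 / p) := by
  have hp' : (ENNReal.ofReal p).toReal = p := ENNReal.toReal_ofReal (by positivity)
  have : Fact (1 ≤ ENNReal.ofReal p) := ⟨by simpa using hp⟩
  have norm_toLp (f : κ → F) :
      ‖WithLp.toLp (ENNReal.ofReal p) f‖ = (∑ j, ‖f j‖ ^ p) ^ (1 / p) := by
    rw [PiLp.norm_eq_sum (by rw [hp']; positivity), hp']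
  simpa [← WithLp.toLp_sum, norm_toLp] using
    norm_sum_le s fun i => WithLp.toLp (ENNReal.ofReal p) (g i)

lemma exists_rpow_sum_norm_le_rademacherSum {ι κ 𝕜 : Type*} [Finite ι] [Fintype κ] [RCLike 𝕜]
    {E : ι → Type*} [∀ i, AddCommGroup (E i)] [∀ i, Module 𝕜 (E i)] {F : Type*}
    [SeminormedAddCommGroup F] [NormedSpace 𝕜 F] {p : ℝ} (hp : 1 ≤ p)
    (f : κ → MultilinearMap 𝕜 E F) (x : ∀ i, κ → E i) :
    ∃ ε : ι → κ → ℤˣ, (∑ j, ‖f j (fun i => x i j)‖ ^ p) ^ (1 / p) ≤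
      (∑ j, ‖f j (fun i => rademacherSum (ε i) (x i))‖ ^ p) ^ (1 / p) := by
  classical
  have := Fintype.ofFinite ι
  let N : ℕ := Fintype.card (ι → κ → ℤˣ)
  have norm_smul_N (y : F) : ‖(N : ℤ) • y‖ = N * ‖y‖ := by
    rw [← Int.cast_smul_eq_zsmul 𝕜, norm_smul]; simp
  have sum_le_sum :
      ∑ _ε : ι → κ → ℤˣ, (∑ j, ‖f j (fun i => x i j)‖ ^ p) ^ (1 / p) ≤
        ∑ ε : ι → κ → ℤˣ, (∑ j, ‖f j (fun i => rademacherSum (ε i) (x i))‖ ^ p) ^ (1 / p) :=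
    calc ∑ _ε : ι → κ → ℤˣ, (∑ j, ‖f j (fun i => x i j)‖ ^ p) ^ (1 / p)
        = (∑ j, ‖(N : ℤ) • f j (fun i => x i j)‖ ^ p) ^ (1 / p) := by
          simp_rw [norm_smul_N, Real.mul_rpow (Nat.cast_nonneg N) (norm_nonneg _),
            ← Finset.mul_sum]
          rw [Real.mul_rpow (by positivity) (by positivity), one_div,
            Real.rpow_rpow_inv (Nat.cast_nonneg N) (by positivity), Finset.sum_const,
            Finset.card_univ, nsmul_eq_mul]
      _ = (∑ j, ‖∑ ε : ι → κ → ℤˣ,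
            (∏ i, ε i j) • f j (fun i => rademacherSum (ε i) (x i))‖ ^ p) ^ (1 / p) := by
          simp_rw [sum_sign_smul_multilinearMap_rademacherSum, N]
      _ ≤ ∑ ε : ι → κ → ℤˣ, (∑ j,
            ‖(∏ i, ε i j) • f j (fun i => rademacherSum (ε i) (x i))‖ ^ p) ^ (1 / p) :=
          rpow_sum_norm_sum_le hp _ _
      _ = ∑ ε : ι → κ → ℤˣ,
            (∑ j, ‖f j (fun i => rademacherSum (ε i) (x i))‖ ^ p) ^ (1 / p) := by
          simp_rw [norm_units_zsmul]
  obtain ⟨ε, -, hε⟩ := Finset.exists_le_of_sum_le Finset.univ_nonempty sum_le_sum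
  exact ⟨ε, hε⟩

section WeakNorm

variable {𝕜 : Type*} [RCLike 𝕜] {E : Type*} [NormedAddCommGroup E] [NormedSpace 𝕜 E] {m : ℕ}

lemma weakLpNorm_nonneg (q : ℝ) (x : Fin m → E) : 0 ≤ weakLpNorm 𝕜 q x :=
  Real.iSup_nonneg fun _ => by positivity

lemma rpow_sum_norm_apply_le_weakLpNorm {q : ℝ} (hq : 0 ≤ q) (x : Fin m → E) {φ : E →L[𝕜] 𝕜}
    (hφ : ‖φ‖ ≤ 1) : (∑ j, ‖φ (x j)‖ ^ q) ^ (1 / q) ≤ weakLpNorm 𝕜 q x := by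
  refine le_ciSup (f := fun ψ : {ψ : E →L[𝕜] 𝕜 // ‖ψ‖ ≤ 1} =>
    (∑ j, ‖ψ.1 (x j)‖ ^ q) ^ (1 / q)) ⟨(∑ j, ‖x j‖ ^ q) ^ (1 / q), ?_⟩ ⟨φ, hφ⟩
  rintro _ ⟨ψ, rfl⟩
  dsimp only
  gcongr with j
  simpa using ψ.1.le_of_opNorm_le ψ.2 (x j)

lemma norm_rademacherSum_le_weakLpNorm_one (ε : Fin m → ℤˣ) (x : Fin m → E) :
    ‖rademacherSum ε x‖ ≤ weakLpNorm 𝕜 1 x := by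
  obtain ⟨φ, hφ, hφx⟩ := exists_dual_vector'' 𝕜 (rademacherSum ε x)
  calc ‖rademacherSum ε x‖ = ‖∑ k, ε k • φ (x k)‖ := by
        rw [← RCLike.norm_coe_norm (𝕜 := 𝕜), ← hφx]
        simp [rademacherSum, Units.smul_def]
    _ ≤ ∑ k, ‖ε k • φ (x k)‖ := norm_sum_le _ _
    _ = ∑ k, ‖φ (x k)‖ := by simp_rw [norm_units_zsmul]
    _ ≤ weakLpNorm 𝕜 1 x := by
        simpa using rpow_sum_norm_apply_le_weakLpNorm zero_le_one x hφ

end WeakNorm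

/-- The multilinear map in the first block of variables obtained from `A` by fixing the second block
at `v`; the map `A.currySum u` instead fixes the first block. -/
def fixInr {ι κ R : Type*} [CommSemiring R] {E : ι ⊕ κ → Type*} [∀ i, AddCommMonoid (E i)]
    [∀ i, Module R (E i)] {F : Type*} [AddCommMonoid F] [Module R F] (A : MultilinearMap R E F)
    (v : ∀ k, E (Sum.inr k)) : MultilinearMap R (fun i => E (Sum.inl i)) F where
  toFun u := A.currySum u v
  map_update_add' := by simp
  map_update_smul' := by simp

theorem absSumming_of_fixed_coordinates_general {𝕜 : Type*} [RCLike 𝕜] {ι κ : Type*} [Fintype ι]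
    [Fintype κ] {E : ι ⊕ κ → Type*} [∀ i, NormedAddCommGroup (E i)] [∀ i, NormedSpace 𝕜 (E i)]
    {F : Type*} [NormedAddCommGroup F] [NormedSpace 𝕜 F] {p : ℝ} (hp : 1 ≤ p) {q : κ → ℝ}
    (A : MultilinearMap 𝕜 E F) {C : ℝ} (hC : 0 ≤ C)
    (hA : ∀ u : ∀ i, E (Sum.inl i),
      AbsSummingWith 𝕜 p q (C * ∏ i, ‖u i‖) ⇑(A.currySum u)) :
    AbsSummingWith 𝕜 p (Sum.elim (fun _ => 1) q) C ⇑A := by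
  intro m x
  have apply_eq (j : Fin m) : A (fun i => x i j) =
      fixInr A (fun k => x (Sum.inr k) j) (fun i => x (Sum.inl i) j) :=
    congrArg A (funext (Sum.rec (fun _ => rfl) (fun _ => rfl)))
  obtain ⟨ε, hε⟩ := exists_rpow_sum_norm_le_rademacherSum hp
    (fun j => fixInr A fun k => x (Sum.inr k) j) fun i => x (Sum.inl i)
  have hW : 0 ≤ ∏ k, weakLpNorm 𝕜 (q k) (x (Sum.inr k)) :=
    Finset.prod_nonneg fun k _ => weakLpNorm_nonneg _ _
  calc (∑ j, ‖A (fun i => x i j)‖ ^ p) ^ (1 / p)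
      ≤ (∑ j, ‖A.currySum (fun i => rademacherSum (ε i) (x (Sum.inl i)))
          (fun k => x (Sum.inr k) j)‖ ^ p) ^ (1 / p) := by
        simp_rw [apply_eq]
        exact hε
    _ ≤ (C * ∏ i, ‖rademacherSum (ε i) (x (Sum.inl i))‖) *
          ∏ k, weakLpNorm 𝕜 (q k) (x (Sum.inr k)) := hA _ m fun k => x (Sum.inr k)
    _ ≤ (C * ∏ i, weakLpNorm 𝕜 1 (x (Sum.inl i))) *
          ∏ k, weakLpNorm 𝕜 (q k) (x (Sum.inr k)) := by
        gcongr
        exact norm_rademacherSum_le_weakLpNorm_one _ _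
    _ = C * ∏ i, weakLpNorm 𝕜 (Sum.elim (fun _ => 1) q i) (x i) := by
        simp [Fintype.prod_sum_type, mul_assoc]

/-- If for all fixed `x₁,…,x_r` the `s`-linear map
`A_{x₁⋯x_r}(x_{r+1},…,x_n) = A(x₁,…,x_n)` is absolutely `(1; q₁,…,q_s)`-summing with
`‖A_{x₁⋯x_r}‖_{as} ≤ K ‖A‖ ‖x₁‖ ⋯ ‖x_r‖`, then `A` is absolutely
`(1; 1,…,1, q₁,…,q_s)`-summing with `‖A‖_{as} ≤ K ‖A‖`. -/
theorem absSumming_of_fixed_coordinates {𝕜 : Type*} [RCLike 𝕜] {r s : ℕ}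
    (hr : 1 ≤ r) (hs : 1 ≤ s)
    {E : Fin r ⊕ Fin s → Type*}
    [∀ i, NormedAddCommGroup (E i)] [∀ i, NormedSpace 𝕜 (E i)] [∀ i, CompleteSpace (E i)]
    {F : Type*} [NormedAddCommGroup F] [NormedSpace 𝕜 F] [CompleteSpace F]
    {q : Fin s → ℝ} (hq : ∀ j, 1 ≤ q j)
    (A : ContinuousMultilinearMap 𝕜 E F) {K : ℝ} (hK : 0 < K)
    (hA : ∀ x : ∀ i : Fin r, E (Sum.inl i),
      AbsSummingWith 𝕜 1 q ((K * ‖A‖) * ∏ i, ‖x i‖)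
        (fun y : ∀ j : Fin s, E (Sum.inr j) =>
          A (Sum.rec (motive := fun i => E i) x y))) :
    AbsSummingWith 𝕜 1 (Sum.elim (fun _ => 1) q) (K * ‖A‖) ⇑A :=
  absSumming_of_fixed_coordinates_general le_rfl A.toMultilinearMap (by positivity) hA
end
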